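/- Let k ∈ {0,1} and let F(z) = z^k ∏_{j=1}^∞ (1 − z/ξ_j), where ξ_j > 0 for all j, Σ_j 1/ξ_j < ∞, and the product has at least one factor if k = 0. Then there exists a bounded measurable function g : ℝ → ℝ, vanishing on [0,∞), such that for every z ∈ ℂ with Re(z) < 0 one has 1/F(z) = ∫_{−∞}^0 g(t) e^{−zt} dt, the integral converging absolutely. -/

import Mathlib

noncomputable section

open MeasureTheory Filter Set

namespace BS

/-! For `Re z < ξ`, the factor `(1 - z/ξ)⁻¹` is the moment generating function of an exponential
variable of rate `ξ`. Hence the product of these factors is that of a sum `S ≥ 0` of independent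
exponentials, which converges almost surely because the means `1/ξ_j` are summable. Keep one factor
of `1/F` apart, of the form `c / (a - z)` with `a ≥ 0`: it is the Laplace transform of the bounded
kernel `c e^{-as}` on `(0, ∞)`. Convolving this kernel with the law of `S` gives a bounded function
on `(0, ∞)` whose Laplace transform is `1/F`, and `g` is its reflection. -/

open ProbabilityTheory
open scoped Convolution

section MeasureConvolution

variable {G E : Type*} [AddGroup G] [MeasurableSpace G] [NormedAddCommGroup E] [NormedSpace ℝ E]

/-- The convolution `ν * f` of a measure with a function: if `f` is a density of a measure `μ`,
this is a density of the law `ν * μ`. -/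
def convolve (ν : Measure G) (f : G → E) (x : G) : E := ∫ u, f (x - u) ∂ν

lemma stronglyMeasurable_convolve [MeasurableSub₂ G] {ν : Measure G} [SFinite ν] {f : G → E}
    (hf : StronglyMeasurable f) : StronglyMeasurable (convolve ν f) :=
  StronglyMeasurable.integral_prod_right' (f := fun p : G × G => f (p.1 - p.2))
    (hf.comp_measurable measurable_sub)

lemma norm_convolve_le {ν : Measure G} [IsProbabilityMeasure ν] {f : G → E} {C : ℝ}
    (hf : ∀ x, ‖f x‖ ≤ C) (x : G) : ‖convolve ν f x‖ ≤ C := by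
  simpa only [probReal_univ, mul_one, convolve] using
    norm_integral_le_of_norm_le_const (μ := ν) (Eventually.of_forall fun u => hf (x - u))

lemma ofReal_convolve (ν : Measure G) (f : G → ℝ) (x : G) :
    ((convolve ν f x : ℝ) : ℂ) = convolve ν (fun y => (f y : ℂ)) x :=
  integral_ofReal.symm

lemma convolve_eq_zero_of_nonpos {ν : Measure ℝ} (hν : ∀ᵐ u ∂ν, 0 ≤ u) {f : ℝ → E}
    (hf : ∀ s ≤ 0, f s = 0) {s : ℝ} (hs : s ≤ 0) : convolve ν f s = 0 :=
  integral_eq_zero_of_ae <| hν.mono fun u hu => hf (s - u) (by linarith)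

end MeasureConvolution

section Laplace

variable {E : Type*} [NormedAddCommGroup E] [NormedSpace ℂ E] {ν : Measure ℝ} {f : ℝ → E} {z : ℂ}

lemma integrable_cexp_of_ae_nonneg [IsFiniteMeasure ν] (hν : ∀ᵐ u ∂ν, 0 ≤ u) (hz : z.re ≤ 0) :
    Integrable (fun u : ℝ => Complex.exp (z * u)) ν :=
  .of_bound (by fun_prop) 1 <| hν.mono fun u hu => by
    rw [Complex.norm_exp, Complex.re_mul_ofReal, Real.exp_le_one_iff]
    exact mul_nonpos_of_nonpos_of_nonneg hz hu

lemma integrableOn_Iic_comp_neg_mul_cexp {h : ℝ → ℝ}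
    (hint : Integrable fun s : ℝ => Complex.exp (z * s) • (h s : ℂ)) :
    IntegrableOn (fun t : ℝ => (h (-t) : ℂ) * Complex.exp (-z * t)) (Iic 0) := by
  simpa only [smul_eq_mul, mul_comm, Complex.ofReal_neg, mul_neg, neg_mul] using
    hint.comp_neg.integrableOn

lemma setIntegral_Iic_comp_neg_mul_cexp {h : ℝ → ℝ} (hzero : ∀ s ≤ 0, h s = 0) :
    ∫ t in Iic (0 : ℝ), (h (-t) : ℂ) * Complex.exp (-z * t) =
      ∫ s : ℝ, Complex.exp (z * s) • (h s : ℂ) := by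
  rw [setIntegral_eq_integral_of_forall_compl_eq_zero fun t ht => ?_,
    ← integral_neg_eq_self]
  · simp only [smul_eq_mul, mul_comm, Complex.ofReal_neg, mul_neg, neg_neg]
  · rw [hzero (-t) (neg_nonpos.2 (notMem_Iic.1 ht).le), Complex.ofReal_zero, zero_mul]

lemma cexp_smul_convolve (ν : Measure ℝ) (f : ℝ → E) (z : ℂ) (s : ℝ) :
    Complex.exp (z * s) • convolve ν f s =
      ((fun u : ℝ => Complex.exp (z * u)) ⋆[ContinuousLinearMap.lsmul ℂ ℂ, ν]
        fun s : ℝ => Complex.exp (z * s) • f s) s := by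
  rw [convolution_def, convolve, ← integral_smul]
  congr with u
  rw [ContinuousLinearMap.lsmul_apply, smul_smul, ← Complex.exp_add]
  push_cast
  ring_nf

variable [SFinite ν]

lemma integrable_cexp_smul_convolve (hν : Integrable (fun u : ℝ => Complex.exp (z * u)) ν)
    (hf : Integrable fun s : ℝ => Complex.exp (z * s) • f s) :
    Integrable fun s : ℝ => Complex.exp (z * s) • convolve ν f s := by
  simp only [cexp_smul_convolve]
  exact (hν.convolution_integrand (ContinuousLinearMap.lsmul ℂ ℂ) hf).integral_prod_left

lemma integral_cexp_smul_convolve [CompleteSpace E]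
    (hν : Integrable (fun u : ℝ => Complex.exp (z * u)) ν)
    (hf : Integrable fun s : ℝ => Complex.exp (z * s) • f s) :
    ∫ s : ℝ, Complex.exp (z * s) • convolve ν f s =
      complexMGF id ν z • ∫ s : ℝ, Complex.exp (z * s) • f s := by
  simp only [cexp_smul_convolve]
  exact integral_convolution (ContinuousLinearMap.lsmul ℂ ℂ) hν hf

end Laplace

section ExpKernel

/-- The function `s ↦ c e^{-as}` on `(0, ∞)`, extended by zero. It is the exponential density for
`c = a > 0` and a multiple of the Heaviside function for `a = 0`. -/
def expKernel (a c : ℝ) : ℝ → ℝ := (Ioi 0).indicator fun s => c * Real.exp (-(a * s))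

variable {a : ℝ} {z : ℂ}

lemma measurable_expKernel (a c : ℝ) : Measurable (expKernel a c) :=
  Measurable.indicator (by fun_prop) measurableSet_Ioi

lemma expKernel_of_nonpos (a c : ℝ) {s : ℝ} (hs : s ≤ 0) : expKernel a c s = 0 :=
  indicator_of_notMem (notMem_Ioi.2 hs) _

lemma expKernel_of_pos (a c : ℝ) {s : ℝ} (hs : 0 < s) :
    expKernel a c s = c * Real.exp (-(a * s)) :=
  indicator_of_mem (mem_Ioi.2 hs) _

lemma expKernel_nonneg (a : ℝ) {c : ℝ} (hc : 0 ≤ c) (s : ℝ) : 0 ≤ expKernel a c s :=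
  indicator_nonneg (fun _ _ => by positivity) s

lemma abs_expKernel_le (ha : 0 ≤ a) (c s : ℝ) : |expKernel a c s| ≤ |c| := by
  rcases le_or_gt s 0 with hs | hs
  · simpa only [expKernel_of_nonpos a c hs, abs_zero] using abs_nonneg c
  · rw [expKernel_of_pos a c hs, abs_mul, Real.abs_exp]
    exact mul_le_of_le_one_right (abs_nonneg c) (Real.exp_le_one_iff.2 (by nlinarith))

lemma cexp_smul_expKernel (a c : ℝ) (z : ℂ) (s : ℝ) :
    Complex.exp (z * s) • (expKernel a c s : ℂ) =
      (Ioi 0).indicator (fun s : ℝ => c * Complex.exp ((z - a) * s)) s := by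
  rcases le_or_gt s 0 with hs | hs
  · rw [expKernel_of_nonpos a c hs, indicator_of_notMem (notMem_Ioi.2 hs), Complex.ofReal_zero,
      smul_zero]
  · rw [expKernel_of_pos a c hs, indicator_of_mem (mem_Ioi.2 hs), smul_eq_mul]
    push_cast
    rw [mul_left_comm, ← Complex.exp_add]
    ring_nf

lemma integrable_cexp_smul_expKernel (hz : z.re < a) (c : ℝ) :
    Integrable fun s : ℝ => Complex.exp (z * s) • (expKernel a c s : ℂ) := by
  simp only [cexp_smul_expKernel]
  have hre : (z - a).re < 0 := by simpa using hz
  exact (integrable_indicator_iff measurableSet_Ioi).2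
    ((integrableOn_exp_mul_complex_Ioi hre 0).const_mul _)

lemma integral_cexp_smul_expKernel (hz : z.re < a) (c : ℝ) :
    ∫ s : ℝ, Complex.exp (z * s) • (expKernel a c s : ℂ) = c / (a - z) := by
  have hre : (z - a).re < 0 := by simpa using hz
  simp only [cexp_smul_expKernel]
  rw [integral_indicator measurableSet_Ioi, integral_const_mul,
    integral_exp_mul_complex_Ioi hre, Complex.ofReal_zero, mul_zero, Complex.exp_zero,
    ← neg_sub (a : ℂ) z, neg_div_neg_eq, mul_one_div]

variable {ν : Measure ℝ} [IsFiniteMeasure ν]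

lemma integrable_cexp_smul_convolve_expKernel (hν : ∀ᵐ u ∂ν, 0 ≤ u) (hz : z.re ≤ 0)
    (hza : z.re < a) (c : ℝ) :
    Integrable fun s : ℝ => Complex.exp (z * s) • ((convolve ν (expKernel a c) s : ℝ) : ℂ) := by
  simp only [ofReal_convolve]
  exact integrable_cexp_smul_convolve (integrable_cexp_of_ae_nonneg hν hz)
    (integrable_cexp_smul_expKernel hza c)

lemma integral_cexp_smul_convolve_expKernel (hν : ∀ᵐ u ∂ν, 0 ≤ u) (hz : z.re ≤ 0)
    (hza : z.re < a) (c : ℝ) :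
    ∫ s : ℝ, Complex.exp (z * s) • ((convolve ν (expKernel a c) s : ℝ) : ℂ) =
      complexMGF id ν z * (c / (a - z)) := by
  simp only [ofReal_convolve]
  rw [integral_cexp_smul_convolve (integrable_cexp_of_ae_nonneg hν hz)
    (integrable_cexp_smul_expKernel hza c),
    integral_cexp_smul_expKernel hza, smul_eq_mul]

end ExpKernel

section ExponentialLaw

variable {r : ℝ}

lemma expMeasure_eq_withDensity_expKernel (r : ℝ) :
    expMeasure r = volume.withDensity fun x => ENNReal.ofReal (expKernel r r x) := by
  refine withDensity_congr_ae ((Measure.ae_ne volume 0).mono fun x hx => ?_)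
  change exponentialPDF r x = ENNReal.ofReal (expKernel r r x)
  rcases hx.lt_or_gt with hx | hx
  · rw [exponentialPDF_of_neg hx, expKernel_of_nonpos r r hx.le, ENNReal.ofReal_zero]
  · rw [exponentialPDF_of_nonneg hx.le, expKernel_of_pos r r hx]

lemma ae_nonneg_expMeasure (r : ℝ) : ∀ᵐ u ∂expMeasure r, 0 ≤ u := by
  rw [expMeasure_eq_withDensity_expKernel,
    ae_withDensity_iff (measurable_expKernel r r).ennreal_ofReal]
  refine Eventually.of_forall fun u hu => ?_
  contrapose! hu
  rw [expKernel_of_nonpos r r hu.le, ENNReal.ofReal_zero]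

lemma integral_expMeasure {E : Type*} [NormedAddCommGroup E] [NormedSpace ℝ E] (hr : 0 ≤ r)
    (f : ℝ → E) : ∫ x, f x ∂expMeasure r = ∫ x, expKernel r r x • f x := by
  rw [expMeasure_eq_withDensity_expKernel, integral_withDensity_eq_integral_toReal_smul
    (measurable_expKernel r r).ennreal_ofReal (Eventually.of_forall fun _ => ENNReal.ofReal_lt_top)]
  simp only [ENNReal.toReal_ofReal (expKernel_nonneg r hr _)]

lemma integral_id_expMeasure (hr : 0 < r) : ∫ x, x ∂expMeasure r = r⁻¹ := by
  have hGamma : ∫ x in Ioi (0 : ℝ), x ^ ((2 : ℝ) - 1) * Real.exp (-(r * x)) =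
      (1 / r) ^ (2 : ℝ) * Real.Gamma 2 := Real.integral_rpow_mul_exp_neg_mul_Ioi two_pos hr
  calc ∫ x, x ∂expMeasure r
      = ∫ x, (Ioi 0).indicator (fun x => r * (x ^ ((2 : ℝ) - 1) * Real.exp (-(r * x)))) x := by
        rw [integral_expMeasure hr.le]
        congr with x
        rcases le_or_gt x 0 with hx | hx
        · rw [expKernel_of_nonpos r r hx, indicator_of_notMem (notMem_Ioi.2 hx), zero_smul]
        · rw [expKernel_of_pos r r hx, indicator_of_mem (mem_Ioi.2 hx), smul_eq_mul]
          norm_num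
          ring
    _ = r * ((1 / r) ^ (2 : ℝ) * Real.Gamma 2) := by
        rw [integral_indicator measurableSet_Ioi, integral_const_mul, hGamma]
    _ = r⁻¹ := by
        rw [Real.Gamma_two, Real.rpow_two]
        field_simp

lemma integrable_id_expMeasure (hr : 0 < r) : Integrable (fun x => x) (expMeasure r) :=
  .of_integral_ne_zero (by rw [integral_id_expMeasure hr]; positivity)

lemma complexMGF_id_expMeasure (hr : 0 < r) {z : ℂ} (hz : z.re < r) :
    complexMGF id (expMeasure r) z = (1 - z / r)⁻¹ := by
  have hr' : (r : ℂ) ≠ 0 := by exact_mod_cast hr.ne'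
  calc complexMGF id (expMeasure r) z
      = ∫ s : ℝ, Complex.exp (z * s) • (expKernel r r s : ℂ) := by
        simp only [complexMGF, id_eq, integral_expMeasure hr.le, Complex.real_smul, smul_eq_mul,
          mul_comm]
    _ = (1 - z / r)⁻¹ := by
        rw [integral_cexp_smul_expKernel hz, one_sub_div hr', inv_div]

end ExponentialLaw

section IndependentSum

variable {ι Ω : Type*} {mΩ : MeasurableSpace Ω} {P : Measure Ω}

lemma complexMGF_sum_of_iIndepFun {X : ι → Ω → ℝ} (hX : iIndepFun X P)
    (mX : ∀ i, AEMeasurable (X i) P) (s : Finset ι) (z : ℂ) :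
    complexMGF (fun ω => ∑ i ∈ s, X i ω) P z = ∏ i ∈ s, complexMGF (X i) P z := by
  have hs : iIndepFun (fun i : s => X i) P := hX.precomp Subtype.val_injective
  have hprod := hs.integral_fun_prod_comp (f := fun _ (x : ℝ) => Complex.exp (z * x))
    (fun i => mX i) (fun i => by fun_prop)
  rw [← s.prod_coe_sort]
  simp only [complexMGF] at hprod ⊢
  rw [← hprod]
  congr with ω
  rw [← Complex.exp_sum, ← Finset.mul_sum, ← s.sum_coe_sort, Complex.ofReal_sum]

lemma ae_summable_norm_of_summable_integral_norm [Countable ι] {E : Type*} [NormedAddCommGroup E]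
    {X : ι → Ω → E} (hX : ∀ i, Integrable (X i) P)
    (hsum : Summable fun i => ∫ ω, ‖X i ω‖ ∂P) : ∀ᵐ ω ∂P, Summable fun i => ‖X i ω‖ := by
  refine summable_norm_of_tsum_eLpNorm_ne_top le_rfl
    (fun i => (hX i).aestronglyMeasurable) ?_
  simp only [eLpNorm_one_eq_lintegral_enorm, ← ofReal_integral_norm_eq_lintegral_enorm (hX _)]
  exact hsum.tsum_ofReal_ne_top

lemma hasProd_complexMGF_of_iIndepFun [Countable ι] {X : ι → Ω → ℝ} (hX : iIndepFun X P)
    (hint : ∀ i, Integrable (X i) P) (hnonneg : ∀ i, 0 ≤ᵐ[P] X i)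
    (hsum : Summable fun i => ∫ ω, X i ω ∂P) {z : ℂ} (hz : z.re ≤ 0) :
    HasProd (fun i => complexMGF (X i) P z) (complexMGF (fun ω => ∑' i, X i ω) P z) := by
  have hP := hX.isProbabilityMeasure
  have mX : ∀ i, AEMeasurable (X i) P := fun i => (hint i).aemeasurable
  have hnonneg' : ∀ᵐ ω ∂P, ∀ i, 0 ≤ X i ω := ae_all_iff.2 hnonneg
  have hnorm : ∀ i, ∫ ω, ‖X i ω‖ ∂P = ∫ ω, X i ω ∂P := fun i =>
    integral_congr_ae ((hnonneg i).mono fun _ h => Real.norm_of_nonneg h)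
  have hsummable : ∀ᵐ ω ∂P, Summable fun i => X i ω :=
    (ae_summable_norm_of_summable_integral_norm hint (by simpa only [hnorm] using hsum)).mono
      fun _ h => h.of_norm
  simp only [HasProd, ← complexMGF_sum_of_iIndepFun hX mX]
  refine tendsto_integral_filter_of_norm_le_const (Eventually.of_forall fun s => by fun_prop)
    ⟨1, Eventually.of_forall fun s => ?_⟩ ?_
  · filter_upwards [hnonneg'] with ω hω
    rw [Complex.norm_exp, Complex.re_mul_ofReal, Real.exp_le_one_iff]
    exact mul_nonpos_of_nonpos_of_nonneg hz (Finset.sum_nonneg fun i _ => hω i)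
  · filter_upwards [hsummable] with ω hω
    exact (((Complex.continuous_ofReal.tendsto _).comp hω.hasSum).const_mul z).cexp

/-- The convolution of a countable family of laws: the law of the sum of independent random
variables having these laws. Since `∑'` is `0` on divergent series, this is meaningful only when
the random series converges almost surely. -/
def infiniteConv (μ : ι → Measure ℝ) [∀ i, IsProbabilityMeasure (μ i)] : Measure ℝ :=
  (Measure.infinitePi μ).map fun ω => ∑' i, ω i

variable [Countable ι] (μ : ι → Measure ℝ) [∀ i, IsProbabilityMeasure (μ i)]

instance isProbabilityMeasure_infiniteConv : IsProbabilityMeasure (infiniteConv μ) :=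
  Measure.isProbabilityMeasure_map (by fun_prop)

variable {μ}

lemma ae_nonneg_infiniteConv (h : ∀ i, ∀ᵐ u ∂μ i, 0 ≤ u) : ∀ᵐ u ∂infiniteConv μ, 0 ≤ u := by
  rw [infiniteConv, ae_map_iff (by fun_prop) measurableSet_Ici]
  have hω : ∀ᵐ ω ∂Measure.infinitePi μ, ∀ i, 0 ≤ ω i := ae_all_iff.2 fun i =>
    (measurePreserving_eval_infinitePi μ i).quasiMeasurePreserving.ae (h i)
  exact hω.mono fun ω hω => tsum_nonneg hω

lemma hasProd_complexMGF_infiniteConv (hnonneg : ∀ i, ∀ᵐ u ∂μ i, 0 ≤ u)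
    (hint : ∀ i, Integrable (fun u => u) (μ i)) (hsum : Summable fun i => ∫ u, u ∂μ i)
    {z : ℂ} (hz : z.re ≤ 0) :
    HasProd (fun i => complexMGF id (μ i) z) (complexMGF id (infiniteConv μ) z) := by
  have heval : ∀ i, MeasurePreserving (fun ω : ι → ℝ => ω i) (Measure.infinitePi μ) (μ i) :=
    measurePreserving_eval_infinitePi μ
  have hmean : ∀ i, ∫ ω, ω i ∂Measure.infinitePi μ = ∫ u, u ∂μ i := fun i => by
    simpa only [(heval i).map_eq, id_eq] using (integral_map (heval i).aemeasurable
      (aestronglyMeasurable_id (μ := (Measure.infinitePi μ).map fun ω => ω i))).symm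
  have hmgf : ∀ i, complexMGF id (μ i) = complexMGF (fun ω => ω i) (Measure.infinitePi μ) :=
    fun i => by rw [← complexMGF_id_map (heval i).aemeasurable, (heval i).map_eq]
  rw [infiniteConv, complexMGF_id_map (by fun_prop)]
  simp only [hmgf]
  exact hasProd_complexMGF_of_iIndepFun
    (iIndepFun_infinitePi (P := μ) (X := fun _ u => u) (fun _ => measurable_id))
    (fun i => (heval i).integrable_comp_of_integrable (hint i))
    (fun i => (heval i).quasiMeasurePreserving.ae (hnonneg i))
    (by simpa only [hmean] using hsum) hz

end IndependentSum

section LaguerrePolya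

lemma exists_hasProd_inv_one_sub_div {ι : Type*} [Countable ι] {ξ : ι → ℝ} (hpos : ∀ j, 0 < ξ j)
    (hsum : Summable fun j => (ξ j)⁻¹) :
    ∃ ν : Measure ℝ, IsProbabilityMeasure ν ∧ (∀ᵐ u ∂ν, 0 ≤ u) ∧ ∀ z : ℂ, z.re ≤ 0 →
      HasProd (fun j => (1 - z / (ξ j : ℂ))⁻¹) (complexMGF id ν z) := by
  have hprob : ∀ j, IsProbabilityMeasure (expMeasure (ξ j)) := fun j =>
    isProbabilityMeasure_expMeasure (hpos j)
  have hnonneg : ∀ j, ∀ᵐ u ∂expMeasure (ξ j), 0 ≤ u := fun j => ae_nonneg_expMeasure (ξ j)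
  refine ⟨infiniteConv fun j => expMeasure (ξ j), inferInstance, ae_nonneg_infiniteConv hnonneg,
    fun z hz => ?_⟩
  have hfactor : ∀ j, complexMGF id (expMeasure (ξ j)) z = (1 - z / (ξ j : ℂ))⁻¹ := fun j =>
    complexMGF_id_expMeasure (hpos j) (hz.trans_lt (hpos j))
  simpa only [hfactor] using hasProd_complexMGF_infiniteConv hnonneg
    (fun j => integrable_id_expMeasure (hpos j))
    (by simpa only [integral_id_expMeasure (hpos _)] using hsum) hz

lemma inv_eq_mul_inv_of_tendsto_mul_prod {𝕜 : Type*} [NormedField 𝕜] {w L M : 𝕜} {f : ℕ → 𝕜}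
    (hw : w ≠ 0) (hf : ∀ j, f j ≠ 0)
    (hL : Tendsto (fun m => w * ∏ j ∈ Finset.range m, f j) atTop (nhds L))
    (hM : HasProd (fun j => (f j)⁻¹) M) : L⁻¹ = M * w⁻¹ := by
  have hLM : L * M = w := by
    refine tendsto_nhds_unique (hL.mul hM.tendsto_prod_nat) (tendsto_const_nhds.congr fun m => ?_)
    rw [mul_assoc, ← Finset.prod_mul_distrib,
      Finset.prod_eq_one fun j _ => mul_inv_cancel₀ (hf j), mul_one]
  rw [← hLM, mul_inv, mul_left_comm, mul_inv_cancel₀ (right_ne_zero_of_mul (hLM ▸ hw)), mul_one]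

lemma one_sub_div_ne_zero {z : ℂ} (hz : z.re < 0) {x : ℝ} (hx : 0 < x) : 1 - z / (x : ℂ) ≠ 0 := by
  have hre : 0 < (1 - z / (x : ℂ)).re := by
    rw [Complex.sub_re, Complex.one_re, Complex.div_ofReal_re]
    linarith [div_neg_of_neg_of_pos hz hx]
  exact fun h => hre.ne' (by rw [h, Complex.zero_re])

/- The factor `c / (a - z)` is what makes the density bounded: it is split off from the zero
`ξ 0` when `k = 0`, and is the pole `1 / z` when `k = 1`. -/
lemma exists_inv_eq_complexMGF_mul_div {k : ℕ} (hk : k = 0 ∨ k = 1) {ξ : ℕ → ℝ}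
    (hpos : ∀ j, 0 < ξ j) (hsum : Summable fun j => (ξ j)⁻¹) {F : ℂ → ℂ}
    (hF : ∀ z : ℂ, z.re < 0 → Tendsto
      (fun m : ℕ => z ^ k * ∏ j ∈ Finset.range m, (1 - z / (ξ j : ℂ))) atTop (nhds (F z))) :
    ∃ (ν : Measure ℝ) (a c : ℝ), IsProbabilityMeasure ν ∧ (∀ᵐ u ∂ν, 0 ≤ u) ∧ 0 ≤ a ∧
      ∀ z : ℂ, z.re < 0 → (F z)⁻¹ = complexMGF id ν z * (c / (a - z)) := by
  rcases hk with rfl | rfl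
  · obtain ⟨ν, hprob, hν, hprod⟩ := exists_hasProd_inv_one_sub_div
      (fun j => hpos (j + 1)) ((summable_nat_add_iff 1).2 hsum)
    refine ⟨ν, ξ 0, ξ 0, hprob, hν, (hpos 0).le, fun z hz => ?_⟩
    have hξ : (ξ 0 : ℂ) ≠ 0 := by exact_mod_cast (hpos 0).ne'
    have hlim : Tendsto (fun m : ℕ => (1 - z / (ξ 0 : ℂ)) *
        ∏ j ∈ Finset.range m, (1 - z / (ξ (j + 1) : ℂ))) atTop (nhds (F z)) := by
      simpa only [Function.comp_def, pow_zero, one_mul, Finset.prod_range_succ', mul_comm] using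
        (hF z hz).comp (tendsto_add_atTop_nat 1)
    rw [inv_eq_mul_inv_of_tendsto_mul_prod (one_sub_div_ne_zero hz (hpos 0))
      (fun j => one_sub_div_ne_zero hz (hpos (j + 1))) hlim (hprod z hz.le),
      one_sub_div hξ, inv_div]
  · obtain ⟨ν, hprob, hν, hprod⟩ := exists_hasProd_inv_one_sub_div hpos hsum
    refine ⟨ν, 0, -1, hprob, hν, le_rfl, fun z hz => ?_⟩
    have hz0 : z ^ 1 ≠ 0 := pow_ne_zero 1 (by rintro rfl; exact hz.false)
    rw [inv_eq_mul_inv_of_tendsto_mul_prod hz0 (fun j => one_sub_div_ne_zero hz (hpos j))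
      (hF z hz) (hprod z hz.le)]
    simp only [pow_one, Complex.ofReal_zero, zero_sub, Complex.ofReal_neg, Complex.ofReal_one,
      neg_div_neg_eq, one_div]

end LaguerrePolya

/-- Lemma 2: for the Laguerre–Pólya function
`F(z) = z^k ∏_{j} (1 - z/ξ_j)` with `k ∈ {0,1}`, all `ξ_j > 0` and `Σ 1/ξ_j < ∞`,
the reciprocal `1/F` is, on the half-plane `Re z < 0`, the absolutely convergent
Laplace transform `∫_{-∞}^0 g(t) e^{-zt} dt` of a bounded measurable function `g`
vanishing on `[0,∞)`. Here `F` is pinned down as the locally uniform limit of the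
partial products. -/
theorem statement16 (k : ℕ) (hk : k = 0 ∨ k = 1)
    (ξ : ℕ → ℝ) (hpos : ∀ j, 0 < ξ j) (hsum : Summable (fun j => (ξ j)⁻¹))
    (F : ℂ → ℂ)
    (hF : ∀ z : ℂ, Filter.Tendsto
      (fun m : ℕ => z^k * ∏ j ∈ Finset.range m, (1 - z / (ξ j : ℂ)))
      Filter.atTop (nhds (F z))) :
    ∃ g : ℝ → ℝ, Measurable g ∧ (∃ C : ℝ, ∀ t : ℝ, |g t| ≤ C) ∧
      (∀ t : ℝ, 0 ≤ t → g t = 0) ∧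
      ∀ z : ℂ, z.re < 0 →
        IntegrableOn (fun t : ℝ => (g t : ℂ) * Complex.exp (-z * t)) (Set.Iic 0) ∧
        (F z)⁻¹ = ∫ t in Set.Iic (0:ℝ), (g t : ℂ) * Complex.exp (-z * t) := by
  obtain ⟨ν, a, c, hprob, hν, ha, hinv⟩ :=
    exists_inv_eq_complexMGF_mul_div hk hpos hsum fun z _ => hF z
  have hzero : ∀ s ≤ 0, convolve ν (expKernel a c) s = 0 := fun s =>
    convolve_eq_zero_of_nonpos hν fun s => expKernel_of_nonpos a c
  refine ⟨fun t => convolve ν (expKernel a c) (-t), ?_, ⟨|c|, fun t => ?_⟩, fun t ht => ?_,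
    fun z hz => ⟨?_, ?_⟩⟩
  · exact (stronglyMeasurable_convolve
      (measurable_expKernel a c).stronglyMeasurable).measurable.comp measurable_neg
  · exact norm_convolve_le (f := expKernel a c) (abs_expKernel_le ha c) (-t)
  · exact hzero (-t) (neg_nonpos.2 ht)
  · exact integrableOn_Iic_comp_neg_mul_cexp
      (integrable_cexp_smul_convolve_expKernel hν hz.le (hz.trans_le ha) c)
  · rw [hinv z hz, setIntegral_Iic_comp_neg_mul_cexp hzero,
      integral_cexp_smul_convolve_expKernel hν hz.le (hz.trans_le ha) c]

end BS
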